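/- Let I ⊆ ℝ be a closed bounded interval and f : I → I a continuous map admitting no 2-cycle. Then f is universal for the first Sharkovsky class if and only if there exists a point p ∈ I with f(p) = p such that for every ε > 0 there exist points x₁, x₂ ∈ (p, p + ε) ∩ I and x₃, x₄ ∈ (p − ε, p) ∩ I with f(x₁) > p, f(x₂) < p, f(x₃) > p, and f(x₄) < p (that is, arbitrarily near p, on both sides of p, the values of f swing both above p and below p). -/

import Mathlib

/-- `f`, viewed as an interval map on `[a,b]`, is universal for the first Sharkovsky
class: every orbit pattern of any interval map with no 2-cycle occurs as an orbit
pattern of `f`. -/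
def IsUniversalF1 (a b : ℝ) (f : ℝ → ℝ) : Prop :=
  ∀ c d : ℝ, c ≤ d → ∀ g : ℝ → ℝ,
    ContinuousOn g (Set.Icc c d) →
    Set.MapsTo g (Set.Icc c d) (Set.Icc c d) →
    (¬ ∃ x ∈ Set.Icc c d, ∃ y ∈ Set.Icc c d, x ≠ y ∧ g x = y ∧ g y = x) →
    ∀ p ∈ Set.Icc c d, ∃ q ∈ Set.Icc a b,
      ∀ m n : ℕ, (g^[m] p < g^[n] p ↔ f^[m] q < f^[n] q)

/-!
If `g` has no 2-cycle, every later point of an orbit lies on the same side of the current point as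
the next one does (Coppel's lemma), so the order pattern of the orbit is encoded by its sequence of
signs, up, down or stay, where a stay is never followed by a move.

Near a swing point `p` of `f` every such sequence is realised. On either side of `p` and
arbitrarily close to it there is a compact interval whose image is a neighbourhood of `p`. Choose
these intervals closer and closer to `p`, on the left of `p` for an up and on the right for a down,
each covered by the image of the previous one. An orbit following them moves as prescribed, because
all its later points are closer to `p` than the current interval.

Conversely, some map with no 2-cycle spirals into its fixed point, with steps up, up, down, down
repeated forever. An orbit of `f` with that order pattern has both monotone halves converging to one
fixed point of `f`, and its four residue classes modulo 4 provide the four kinds of swings.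
-/

open Set Filter Function Topology

section Coppel

variable {α : Type*} [ConditionallyCompleteLinearOrder α] [TopologicalSpace α] [OrderTopology α]
  [DenselyOrdered α] {f : α → α} {a b x : α}

theorem exists_isFixedPt_forall_Ioc_lt (hab : a ≤ b) (hf : ContinuousOn f (Icc a b))
    (ha : a ≤ f a) (hb : f b < b) :
    ∃ w ∈ Ico a b, IsFixedPt f w ∧ ∀ t ∈ Ioc w b, f t < t := by
  have hclosed : IsClosed {t ∈ Icc a b | t ≤ f t} :=
    isClosed_Icc.isClosed_le continuousOn_id hf
  have hcompact : IsCompact {t ∈ Icc a b | t ≤ f t} :=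
    isCompact_Icc.of_isClosed_subset hclosed (sep_subset _ _)
  obtain ⟨w, ⟨hw, hwf⟩, hmax⟩ := hcompact.exists_isGreatest ⟨a, left_mem_Icc.2 hab, ha⟩
  have hlt : ∀ t ∈ Ioc w b, f t < t := fun t ht ↦
    lt_of_not_ge fun h ↦ (hmax ⟨⟨hw.1.trans ht.1.le, ht.2⟩, h⟩).not_gt ht.1
  obtain ⟨z, hz, hzf⟩ :=
    exists_mem_Icc_isFixedPt (hf.mono (Icc_subset_Icc_left hw.1)) hw.2 hwf hb.le
  obtain rfl : w = z := hz.1.eq_or_lt.resolve_right fun h ↦ (hlt z ⟨h, hz.2⟩).ne hzf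
  exact ⟨w, ⟨hw.1, hw.2.lt_of_ne fun h ↦ hb.ne (h ▸ hzf)⟩, hzf, hlt⟩

/-- A self-map `f` of a set `s` admits no 2-cycle: in `s`, every point of period dividing two is
fixed. -/
def NoTwoCycleOn {α : Type*} (f : α → α) (s : Set α) : Prop :=
  ∀ x ∈ s, f (f x) = x → IsFixedPt f x

theorem noTwoCycleOn_iff_not_exists {α : Type*} {f : α → α} {s : Set α} (hs : MapsTo f s s) :
    NoTwoCycleOn f s ↔ ¬ ∃ x ∈ s, ∃ y ∈ s, x ≠ y ∧ f x = y ∧ f y = x := by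
  constructor
  · rintro h ⟨x, hx, y, -, hne, rfl, hyx⟩
    exact hne (h x hx hyx).symm
  · intro h x hx hxx
    by_contra hne
    exact h ⟨x, hx, f x, hs hx, Ne.symm hne, rfl, hxx⟩

namespace NoTwoCycleOn

theorem lt_map_map (h : NoTwoCycleOn f (Icc a b)) (hf : ContinuousOn f (Icc a b))
    (hmaps : MapsTo f (Icc a b) (Icc a b)) (hx : x ∈ Icc a b) (hxf : x < f x) :
    x < f (f x) := by
  have hsub : Icc a x ⊆ Icc a b := Icc_subset_Icc_right hx.2
  have hmem : ∀ t ∈ Icc a x, f (f t) ∈ Icc a b := fun t ht ↦ hmaps (hmaps (hsub ht))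
  by_contra! hle
  have hlt : f (f x) < x := hle.lt_of_ne fun he ↦ hxf.ne' (h x hx he)
  obtain ⟨w, hw, hwfix, hdesc⟩ := exists_isFixedPt_forall_Ioc_lt (f := f ∘ f) hx.1
    ((hf.comp hf hmaps).mono hsub) (hmem a (left_mem_Icc.2 hx.1)).1 hlt
  have hfw : f w = w := h w (hsub (Ico_subset_Icc_self hw)) hwfix
  obtain ⟨t, ht, rfl⟩ := intermediate_value_Icc hw.2.le
    (hf.mono ((Icc_subset_Icc_left hw.1).trans hsub)) ⟨hfw.trans_le hw.2.le, hxf.le⟩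
  have hwt : w < t := ht.1.lt_of_ne (by rintro rfl; exact hw.2.ne' hfw)
  exact (ht.2.trans_lt hxf).not_gt (hdesc t ⟨hwt, ht.2⟩)

theorem map_lt_of_mem_Ico {d : α} (h : NoTwoCycleOn f (Icc a b)) (hf : ContinuousOn f (Icc a b))
    (hmaps : MapsTo f (Icc a b) (Icc a b)) (hx : x ∈ Icc a b) (hd : d ∈ Icc a b)
    (hxf : x ≤ f x) (hdx : f d ≤ x) {y : α} (hy : y ∈ Ico x d) : f y < d := by
  have hxd : x < d := hy.1.trans_lt hy.2
  obtain ⟨z, hz, hzfix, hdesc⟩ := exists_isFixedPt_forall_Ioc_lt hxd.le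
    (hf.mono (Icc_subset_Icc hx.1 hd.2)) hxf (hdx.trans_lt hxd)
  rcases le_or_gt y z with hyz | hzy
  · by_contra! hdy
    have hsub : Icc y z ⊆ Icc a b := Icc_subset_Icc (hx.1.trans hy.1) (hz.2.le.trans hd.2)
    obtain ⟨u, hu, rfl⟩ :=
      intermediate_value_Icc' hyz (hf.mono hsub) ⟨hzfix.eq.trans_le hz.2.le, hdy⟩
    have hu_lt : u < f (f u) := h.lt_map_map hf hmaps (hsub hu) (hu.2.trans_lt hz.2)
    exact hu_lt.not_ge (hdx.trans (hy.1.trans hu.1))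
  · exact (hdesc y ⟨hzy, hy.2.le⟩).trans hy.2

theorem lt_iterate_succ (h : NoTwoCycleOn f (Icc a b)) (hf : ContinuousOn f (Icc a b))
    (hmaps : MapsTo f (Icc a b) (Icc a b)) (hx : x ∈ Icc a b) (hxf : x < f x) (n : ℕ) :
    x < f^[n + 1] x := by
  induction n using Nat.strong_induction_on with
  | _ n ih =>
  rcases n with _ | n
  · exact hxf
  by_contra! hle
  rw [iterate_succ_apply'] at hle
  have horbit : ∀ j ≤ n + 1, f^[j] x ∈ Ico x (f^[n + 1] x) := by
    intro j hj
    induction j with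
    | zero => exact ⟨le_rfl, ih n n.lt_succ_self⟩
    | succ j ihj =>
      refine ⟨(ih j hj).le, ?_⟩
      rw [iterate_succ_apply']
      exact h.map_lt_of_mem_Ico hf hmaps hx (hmaps.iterate _ hx) hxf.le hle (ihj (by omega))
  exact (horbit (n + 1) le_rfl).2.false

theorem iterate_succ_lt (h : NoTwoCycleOn f (Icc a b)) (hf : ContinuousOn f (Icc a b))
    (hmaps : MapsTo f (Icc a b) (Icc a b)) (hx : x ∈ Icc a b) (hxf : f x < x) (n : ℕ) :
    f^[n + 1] x < x := by
  have hIcc : Icc (OrderDual.toDual b) (OrderDual.toDual a) = Icc a b := Icc_toDual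
  exact lt_iterate_succ (α := αᵒᵈ) (f := f) (a := OrderDual.toDual b) (b := OrderDual.toDual a)
    (by rwa [hIcc]) (by rwa [hIcc]) (by rwa [hIcc]) ⟨hx.2, hx.1⟩ hxf n

theorem cmp_iterate_succ (h : NoTwoCycleOn f (Icc a b)) (hf : ContinuousOn f (Icc a b))
    (hmaps : MapsTo f (Icc a b) (Icc a b)) (hx : x ∈ Icc a b) (n : ℕ) :
    cmp x (f^[n + 1] x) = cmp x (f x) := by
  rcases lt_trichotomy x (f x) with hlt | heq | hgt
  · exact (h.lt_iterate_succ hf hmaps hx hlt n).cmp_eq_lt.trans hlt.cmp_eq_lt.symm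
  · have hfix : IsFixedPt f x := heq.symm
    rw [(hfix.iterate (n + 1)).eq, hfix.eq]
  · exact (h.iterate_succ_lt hf hmaps hx hgt n).cmp_eq_gt.trans hgt.cmp_eq_gt.symm

end NoTwoCycleOn

end Coppel

section Itinerary

variable {X : Type*} {f : X → X}

/-- The points whose orbit under `f` follows the itinerary `C` up to and including time `n`. -/
def itinerarySet (f : X → X) (C : ℕ → Set X) (n : ℕ) : Set X :=
  {x | ∀ i ≤ n, f^[i] x ∈ C i}

theorem itinerarySet_zero (f : X → X) (C : ℕ → Set X) : itinerarySet f C 0 = C 0 := by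
  simp [itinerarySet]

theorem itinerarySet_succ (f : X → X) (C : ℕ → Set X) (n : ℕ) :
    itinerarySet f C (n + 1) = C 0 ∩ f ⁻¹' itinerarySet f (fun i ↦ C (i + 1)) n := by
  ext x
  simp only [itinerarySet, ← Nat.lt_succ_iff, mem_inter_iff, mem_preimage, mem_ofPred_eq]
  exact Nat.forall_lt_succ_left

theorem itinerarySet_nonempty {C : ℕ → Set X} (hne : ∀ n, (C n).Nonempty)
    (hcover : ∀ n, C (n + 1) ⊆ f '' C n) (n : ℕ) : (itinerarySet f C n).Nonempty := by
  induction n generalizing C with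
  | zero => exact (itinerarySet_zero f C).symm ▸ hne 0
  | succ n ih =>
    obtain ⟨y, hy⟩ := ih (fun i ↦ hne (i + 1)) fun i ↦ hcover (i + 1)
    obtain ⟨x, hx, rfl⟩ := hcover 0 (hy 0 n.zero_le)
    exact ⟨x, (itinerarySet_succ f C n).symm ▸ ⟨hx, hy⟩⟩

variable [TopologicalSpace X]

theorem isClosed_itinerarySet {C : ℕ → Set X} (hC : ∀ n, IsClosed (C n))
    (hf : ∀ n, ContinuousOn f (C n)) (n : ℕ) : IsClosed (itinerarySet f C n) := by
  induction n generalizing C with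
  | zero => exact (itinerarySet_zero f C).symm ▸ hC 0
  | succ n ih =>
    rw [itinerarySet_succ]
    exact (hf 0).preimage_isClosed_of_isClosed (hC 0)
      (ih (fun i ↦ hC (i + 1)) fun i ↦ hf (i + 1))

theorem exists_forall_iterate_mem [T2Space X] {C : ℕ → Set X} (hC : ∀ n, IsCompact (C n))
    (hf : ∀ n, ContinuousOn f (C n)) (hne : ∀ n, (C n).Nonempty)
    (hcover : ∀ n, C (n + 1) ⊆ f '' C n) : ∃ q, ∀ n, f^[n] q ∈ C n := by
  obtain ⟨q, hq⟩ := IsCompact.nonempty_iInter_of_sequence_nonempty_isCompact_isClosed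
    (itinerarySet f C) (fun n _ hx i hi ↦ hx i (hi.trans n.le_succ))
    (itinerarySet_nonempty hne hcover) ((itinerarySet_zero f C).symm ▸ hC 0)
    (isClosed_itinerarySet (fun n ↦ (hC n).isClosed) hf)
  exact ⟨q, fun n ↦ mem_iInter.1 hq n n le_rfl⟩

theorem exists_forall_lt_iterate_rel [T2Space X] {s : Set X} {F : ℕ → Filter X}
    {r : ℕ → X → X → Prop} (hf : ContinuousOn f s) [∀ n, (F n).NeBot]
    (hF : ∀ n, F (n + 1) ≤ F n)
    (hbox : ∀ n, ∀ U ∈ F n, ∃ K ⊆ s ∩ U, IsCompact K ∧ f '' K ∈ F n ∧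
      ∀ᶠ v in F n, ∀ x ∈ K, r n x v) :
    ∃ q, (∀ n, f^[n] q ∈ s) ∧ ∀ m n, m < n → r m (f^[m] q) (f^[n] q) := by
  choose! K hKU hKcompact hKimage hKrel using hbox
  let U : ℕ → Set X :=
    Nat.rec univ fun n U ↦ U ∩ (f '' K n U ∩ {v | ∀ x ∈ K n U, r n x v})
  have hU : ∀ n, U n ∈ F n := by
    intro n
    induction n with
    | zero => exact univ_mem
    | succ n ih =>
      exact hF n (inter_mem ih (inter_mem (hKimage n _ ih) (hKrel n _ ih)))
  have hU_anti : Antitone U := antitone_nat_of_succ_le fun n ↦ inter_subset_left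
  have hKsub : ∀ n, K n (U n) ⊆ s ∩ U n := fun n ↦ hKU n _ (hU n)
  obtain ⟨q, hq⟩ := exists_forall_iterate_mem (f := f) (C := fun n ↦ K n (U n))
    (fun n ↦ hKcompact n _ (hU n)) (fun n ↦ hf.mono fun x hx ↦ (hKsub n hx).1)
    (fun n ↦ ((F n).nonempty_of_mem (hKimage n _ (hU n))).of_image)
    (fun n x hx ↦ (hKsub (n + 1) hx).2.2.1)
  refine ⟨q, fun n ↦ (hKsub n (hq n)).1, fun m n hmn ↦ ?_⟩
  have hn : f^[n] q ∈ U (m + 1) := hU_anti hmn (hKsub n (hq n)).2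
  exact hn.2.2 _ (hq m)

end Itinerary

section SwingPoint

/-- The values of `f` along `l` swing both above and below `p`, arbitrarily late. -/
def SwingsAlong {X α : Type*} [LT α] (f : X → α) (p : α) (l : Filter X) : Prop :=
  (∃ᶠ x in l, p < f x) ∧ ∃ᶠ x in l, f x < p

/-- A fixed point `p ∈ s` of `f` such that the values of `f` on `s` swing both above and below `p`
arbitrarily near `p`, on both sides of `p`. -/
structure IsSwingPoint {α : Type*} [Preorder α] [TopologicalSpace α] (f : α → α) (s : Set α)
    (p : α) : Prop where
  mem : p ∈ s
  isFixedPt : IsFixedPt f p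
  right : SwingsAlong f p (𝓝[Ioi p ∩ s] p)
  left : SwingsAlong f p (𝓝[Iio p ∩ s] p)

section OrderedGroup

variable {α : Type*} [AddCommGroup α] [LinearOrder α] [IsOrderedAddMonoid α] [TopologicalSpace α]
  [OrderTopology α] {p : α} {s : Set α} {P : α → Prop}

theorem frequently_nhdsWithin_Ioi_inter_iff [NoMaxOrder α] :
    (∃ᶠ x in 𝓝[Ioi p ∩ s] p, P x) ↔ ∀ ε > 0, ∃ x ∈ Ioo p (p + ε) ∩ s, P x := by
  rw [nhdsWithin_inter', ((nhdsGT_basis p).inf_principal s).frequently_iff]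
  exact ⟨fun h ε hε ↦ h _ (lt_add_of_pos_right p hε),
    fun h u hu ↦ by simpa only [add_sub_cancel] using h (u - p) (sub_pos.2 hu)⟩

theorem frequently_nhdsWithin_Iio_inter_iff [NoMinOrder α] :
    (∃ᶠ x in 𝓝[Iio p ∩ s] p, P x) ↔ ∀ ε > 0, ∃ x ∈ Ioo (p - ε) p ∩ s, P x := by
  rw [nhdsWithin_inter', ((nhdsLT_basis p).inf_principal s).frequently_iff]
  exact ⟨fun h ε hε ↦ h _ (sub_lt_self p hε),
    fun h u hu ↦ by simpa only [sub_sub_cancel] using h (p - u) (sub_pos.2 hu)⟩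

theorem isSwingPoint_iff [NoMaxOrder α] [NoMinOrder α] {f : α → α} :
    IsSwingPoint f s p ↔ p ∈ s ∧ f p = p ∧ ∀ ε > 0,
      (∃ x ∈ Ioo p (p + ε) ∩ s, p < f x) ∧ (∃ x ∈ Ioo p (p + ε) ∩ s, f x < p) ∧
      (∃ x ∈ Ioo (p - ε) p ∩ s, p < f x) ∧ (∃ x ∈ Ioo (p - ε) p ∩ s, f x < p) := by
  simp only [forall_and, ← frequently_nhdsWithin_Ioi_inter_iff,
    ← frequently_nhdsWithin_Iio_inter_iff]
  exact ⟨fun ⟨hp, hfp, hr, hl⟩ ↦ ⟨hp, hfp, hr.1, hr.2, hl.1, hl.2⟩,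
    fun ⟨hp, hfp, hra, hrb, hla, hlb⟩ ↦ ⟨hp, hfp, ⟨hra, hrb⟩, ⟨hla, hlb⟩⟩⟩

end OrderedGroup

theorem eventually_forall_cmp_eq_of_isCompact {α : Type*} [LinearOrder α] [TopologicalSpace α]
    [OrderClosedTopology α] {K : Set α} (hK : IsCompact K) {p : α} {o : Ordering} (ho : o ≠ .eq)
    (h : ∀ x ∈ K, cmp x p = o) : ∀ᶠ v in 𝓝 p, ∀ x ∈ K, cmp x v = o := by
  refine hK.eventually_forall_of_forall_eventually fun x hx ↦ ?_
  have hxp := h x hx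
  cases o with
  | eq => exact absurd rfl ho
  | lt =>
    simp only [cmp_eq_lt_iff] at hxp ⊢
    exact continuousAt_snd.eventually_lt continuousAt_fst hxp
  | gt =>
    simp only [cmp_eq_gt_iff] at hxp ⊢
    exact continuousAt_fst.eventually_lt continuousAt_snd hxp

variable {α : Type*} [ConditionallyCompleteLinearOrder α] [TopologicalSpace α] [OrderTopology α]
  [DenselyOrdered α] {f : α → α} {s : Set α} {p : α}

theorem SwingsAlong.exists_isCompact_image_mem_nhds {J : Set α} [J.OrdConnected]
    (h : SwingsAlong f p (𝓝[J] p)) (hf : ContinuousOn f J) {U : Set α} (hU : U ∈ 𝓝 p) :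
    ∃ K ⊆ J ∩ U, IsCompact K ∧ f '' K ∈ 𝓝 p := by
  obtain ⟨c, d, -, hcd, hcdU⟩ := exists_Icc_mem_subset_of_mem_nhds hU
  have hnear : ∀ᶠ x in 𝓝[J] p, x ∈ J ∩ Icc c d :=
    inter_mem self_mem_nhdsWithin (mem_nhdsWithin_of_mem_nhds hcd)
  obtain ⟨x, hxp, hx⟩ := (h.1.and_eventually hnear).exists
  obtain ⟨y, hyp, hy⟩ := (h.2.and_eventually hnear).exists
  have hsub : uIcc y x ⊆ J ∩ Icc c d := OrdConnected.uIcc_subset inferInstance hy hx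
  refine ⟨uIcc y x, hsub.trans (inter_subset_inter_right J hcdU), isCompact_uIcc, ?_⟩
  exact mem_of_superset (Icc_mem_nhds hyp hxp) (Icc_subset_uIcc.trans
    (intermediate_value_uIcc (hf.mono fun z hz ↦ (hsub hz).1)))

theorem IsSwingPoint.exists_isCompact_cmp_eq [s.OrdConnected] (h : IsSwingPoint f s p)
    (hf : ContinuousOn f s) {o : Ordering} (ho : o ≠ .eq) {U : Set α} (hU : U ∈ 𝓝 p) :
    ∃ K ⊆ s ∩ U, IsCompact K ∧ f '' K ∈ 𝓝 p ∧ ∀ x ∈ K, cmp x p = o := by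
  cases o with
  | eq => exact absurd rfl ho
  | lt =>
    obtain ⟨K, hK, hKc, hKf⟩ :=
      h.left.exists_isCompact_image_mem_nhds (hf.mono inter_subset_right) hU
    exact ⟨K, fun x hx ↦ ⟨(hK hx).1.2, (hK hx).2⟩, hKc, hKf,
      fun x hx ↦ (cmp_eq_lt_iff x p).2 (hK hx).1.1⟩
  | gt =>
    obtain ⟨K, hK, hKc, hKf⟩ :=
      h.right.exists_isCompact_image_mem_nhds (hf.mono inter_subset_right) hU
    exact ⟨K, fun x hx ↦ ⟨(hK hx).1.2, (hK hx).2⟩, hKc, hKf,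
      fun x hx ↦ (cmp_eq_gt_iff x p).2 (hK hx).1.1⟩

theorem IsSwingPoint.exists_orbit_forall_cmp_eq [s.OrdConnected] (h : IsSwingPoint f s p)
    (hf : ContinuousOn f s) {σ : ℕ → Ordering} (hσ : ∀ n, σ n = .eq → σ (n + 1) = .eq) :
    ∃ q, (∀ n, f^[n] q ∈ s) ∧ ∀ m n, m < n → cmp (f^[m] q) (f^[n] q) = σ m := by
  -- Once the prescribed orbit stays put it has to sit at `p` itself, so from then on the
  -- neighbourhoods of `p` are replaced by `{p}`.
  let S : ℕ → Set α := fun n ↦ {x | σ n = .eq → x = p}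
  have hS_eq : ∀ n, σ n = .eq → 𝓝[S n] p = pure p := fun n hn ↦ by
    simp only [S, hn, true_imp_iff, ofPred_eq_eq_singleton, nhdsWithin_singleton]
  have hS_ne : ∀ n, σ n ≠ .eq → 𝓝[S n] p = 𝓝 p := fun n hn ↦ by
    simp only [S, hn, false_imp_iff, ofPred_true, nhdsWithin_univ]
  have hS_neBot : ∀ n, (𝓝[S n] p).NeBot := fun n ↦ nhdsWithin_neBot_of_mem fun _ ↦ rfl
  refine exists_forall_lt_iterate_rel (F := fun n ↦ 𝓝[S n] p) (r := fun n x v ↦ cmp x v = σ n) hf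
    (fun n ↦ nhdsWithin_mono p fun x hx hn ↦ hx (hσ n hn)) fun n U hU ↦ ?_
  by_cases hn : σ n = .eq
  · rw [hS_eq n hn] at hU ⊢
    refine ⟨{p}, singleton_subset_iff.2 ⟨h.mem, hU⟩, isCompact_singleton,
      ⟨p, rfl, h.isFixedPt⟩, ?_⟩
    rintro x rfl
    exact (cmp_self_eq_eq x).trans hn.symm
  · rw [hS_ne n hn] at hU ⊢
    obtain ⟨K, hKU, hK, hKf, hKp⟩ := h.exists_isCompact_cmp_eq hf hn hU
    exact ⟨K, hKU, hK, hKf, eventually_forall_cmp_eq_of_isCompact hK hn hKp⟩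

end SwingPoint

theorem lt_iff_lt_of_forall_lt_cmp_eq {ι α β : Type*} [LinearOrder ι] [LinearOrder α]
    [LinearOrder β] {y : ι → α} {z : ι → β} (h : ∀ m n, m < n → cmp (y m) (y n) = cmp (z m) (z n))
    (m n : ι) : y m < y n ↔ z m < z n := by
  apply lt_iff_lt_of_cmp_eq_cmp
  rcases lt_trichotomy m n with hmn | rfl | hnm
  · exact h m n hmn
  · simp only [cmp_self_eq_eq]
  · exact cmp_eq_cmp_symm.1 (h n m hnm)

theorem IsSwingPoint.isUniversalF1 {a b p : ℝ} {f : ℝ → ℝ} (h : IsSwingPoint f (Icc a b) p)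
    (hf : ContinuousOn f (Icc a b)) : IsUniversalF1 a b f := by
  intro c d _ g hg hmaps hno2 r hr
  have hcoppel : ∀ m n, m < n → cmp (g^[m] r) (g^[n] r) = cmp (g^[m] r) (g^[m + 1] r) := by
    intro m n hmn
    obtain ⟨k, rfl⟩ := Nat.exists_eq_add_of_lt hmn
    rw [show m + k + 1 = (k + 1) + m by ring, iterate_add_apply, iterate_succ_apply' g m]
    exact ((noTwoCycleOn_iff_not_exists hmaps).2 hno2).cmp_iterate_succ hg hmaps
      (hmaps.iterate m hr) k
  obtain ⟨q, hq, hcmp⟩ := h.exists_orbit_forall_cmp_eq hf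
    (σ := fun n ↦ cmp (g^[n] r) (g^[n + 1] r)) fun n hn ↦ by
      rw [cmp_eq_eq_iff] at hn ⊢
      simpa only [iterate_succ_apply'] using congrArg g hn
  exact ⟨q, hq 0, lt_iff_lt_of_forall_lt_cmp_eq fun m n hmn ↦
    (hcoppel m n hmn).trans (hcmp m n hmn).symm⟩

section Spiral

/-- A sequence spiralling inwards with steps up, up, down, down: its terms at the times congruent to
0 and 1 modulo 4, in this order, increase, and those at the remaining times decrease. -/
structure IsSpiral {α : Type*} [LT α] (x : ℕ → α) : Prop where
  zero_lt_one (k : ℕ) : x (4 * k) < x (4 * k + 1)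
  one_lt_four (k : ℕ) : x (4 * k + 1) < x (4 * k + 4)
  three_lt_two (k : ℕ) : x (4 * k + 3) < x (4 * k + 2)
  six_lt_three (k : ℕ) : x (4 * k + 6) < x (4 * k + 3)

theorem IsSpiral.of_forall_lt_imp_lt {α β : Type*} [LT α] [LT β] {x : ℕ → α} {y : ℕ → β}
    (hx : IsSpiral x) (h : ∀ m n, x m < x n → y m < y n) : IsSpiral y where
  zero_lt_one k := h _ _ (hx.zero_lt_one k)
  one_lt_four k := h _ _ (hx.one_lt_four k)
  three_lt_two k := h _ _ (hx.three_lt_two k)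
  six_lt_three k := h _ _ (hx.six_lt_three k)

/-- The model of a map with no 2-cycle that has a spiralling orbit. At `|x| = 2⁻ⁿ` the cosine is
`(-1)ⁿ`, so the orbit of `-1` is halved at each step and changes sign at every second one. The value
`spiralMap 0 = 0` does not depend on the convention for `logb 2 0`. -/
noncomputable def spiralMap (x : ℝ) : ℝ := x * Real.cos (Real.pi * Real.logb 2 x) / 2

theorem spiralMap_zero : spiralMap 0 = 0 := by
  simp only [spiralMap, zero_mul, zero_div]

theorem abs_spiralMap_le (x : ℝ) : |spiralMap x| ≤ |x| / 2 := by
  rw [spiralMap, abs_div, abs_mul, abs_two]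
  gcongr
  exact mul_le_of_le_one_right (abs_nonneg x) (Real.abs_cos_le_one _)

theorem continuous_spiralMap : Continuous spiralMap := by
  refine continuous_iff_continuousAt.2 fun x ↦ ?_
  rcases eq_or_ne x 0 with rfl | hx
  · rw [ContinuousAt, spiralMap_zero]
    refine squeeze_zero_norm abs_spiralMap_le ?_
    exact (by fun_prop : Continuous fun x : ℝ ↦ |x| / 2).tendsto' 0 0 (by simp)
  · unfold spiralMap
    fun_prop (disch := assumption)

theorem mapsTo_spiralMap_Icc (r : ℝ) : MapsTo spiralMap (Icc (-r) r) (Icc (-r) r) := by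
  intro x hx
  rw [mem_Icc, ← abs_le] at hx ⊢
  linarith [abs_spiralMap_le x, abs_nonneg x]

theorem noTwoCycleOn_spiralMap (s : Set ℝ) : NoTwoCycleOn spiralMap s := by
  intro x _ hxx
  have hle : |x| ≤ |spiralMap x| / 2 := by simpa only [hxx] using abs_spiralMap_le (spiralMap x)
  obtain rfl : x = 0 := abs_nonpos_iff.1 (by linarith [abs_spiralMap_le x])
  exact spiralMap_zero

theorem spiralMap_of_abs_eq {x : ℝ} {n : ℕ} (hx : |x| = (1 / 2) ^ n) :
    spiralMap x = (-1) ^ n * x / 2 := by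
  have hlog : Real.logb 2 x = -n := by
    rw [← Real.logb_abs, hx, one_div, inv_pow, Real.logb_inv, Real.logb_pow,
      Real.logb_self_eq_one one_lt_two, mul_one]
  rw [spiralMap, hlog, mul_neg, Real.cos_neg, mul_comm Real.pi, Real.cos_nat_mul_pi, mul_comm x]

theorem abs_iterate_spiralMap (n : ℕ) : |spiralMap^[n] (-1)| = (1 / 2) ^ n := by
  induction n with
  | zero => simp
  | succ n ih =>
    rw [iterate_succ_apply', spiralMap_of_abs_eq ih, abs_div, abs_mul, abs_pow, abs_neg, abs_one,
      one_pow, one_mul, abs_two, ih]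
    ring

theorem iterate_succ_spiralMap (n : ℕ) :
    spiralMap^[n + 1] (-1) = (-1) ^ n * spiralMap^[n] (-1) / 2 := by
  rw [iterate_succ_apply', spiralMap_of_abs_eq (abs_iterate_spiralMap n)]

theorem isSpiral_iterate_spiralMap : IsSpiral fun n ↦ spiralMap^[n] (-1) := by
  set y : ℕ → ℝ := fun n ↦ spiralMap^[n] (-1)
  have hstep : ∀ n, y (n + 1) = (-1) ^ n * y n / 2 := iterate_succ_spiralMap
  have heven : ∀ n, Even n → y (n + 1) = y n / 2 := fun n hn ↦ by
    rw [hstep, hn.neg_one_pow, one_mul]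
  have hodd : ∀ n, Odd n → y (n + 1) = -y n / 2 := fun n hn ↦ by
    rw [hstep, hn.neg_one_pow, neg_one_mul]
  have hone : ∀ k, y (4 * k + 1) = y (4 * k) / 2 := fun k ↦ heven _ (by grind)
  have htwo : ∀ k, y (4 * k + 2) = -y (4 * k + 1) / 2 := fun k ↦ hodd _ (by grind)
  have hthree : ∀ k, y (4 * k + 3) = y (4 * k + 2) / 2 := fun k ↦ heven _ (by grind)
  have hfour : ∀ k, y (4 * k + 4) = -y (4 * k + 3) / 2 := fun k ↦ hodd _ (by grind)
  have hneg : ∀ k, y (4 * k) < 0 := by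
    intro k
    induction k with
    | zero => exact neg_one_lt_zero
    | succ k ih =>
      rw [mul_add_one]
      linarith [hone k, htwo k, hthree k, hfour k]
  constructor <;> intro k
  · linarith [hneg k, hone k]
  · linarith [hneg k, hone k, htwo k, hthree k, hfour k]
  · linarith [hneg k, hone k, htwo k, hthree k]
  · have hfive : y (4 * k + 5) = y (4 * k + 4) / 2 := hone (k + 1)
    have hsix : y (4 * k + 6) = -y (4 * k + 5) / 2 := htwo (k + 1)
    linarith [hneg k, hone k, htwo k, hthree k, hfour k]

theorem exists_tendsto_nhdsLT_of_interlacing {α : Type*} [ConditionallyCompleteLinearOrder α]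
    [TopologicalSpace α] [OrderTopology α] {u v : ℕ → α} (huv : ∀ k, u k < v k)
    (hvu : ∀ k, v k < u (k + 1)) (hbdd : BddAbove (range u)) :
    ∃ p, Tendsto u atTop (𝓝[<] p) ∧ Tendsto v atTop (𝓝[<] p) := by
  have hmono : StrictMono u := strictMono_nat_of_lt_succ fun k ↦ (huv k).trans (hvu k)
  have hu : Tendsto u atTop (𝓝 (⨆ k, u k)) := tendsto_atTop_ciSup hmono.monotone hbdd
  have hv : Tendsto v atTop (𝓝 (⨆ k, u k)) :=
    tendsto_of_tendsto_of_tendsto_of_le_of_le hu ((tendsto_add_atTop_iff_nat 1).2 hu)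
      (fun k ↦ (huv k).le) fun k ↦ (hvu k).le
  have hv_lt : ∀ k, v k < ⨆ k, u k := fun k ↦ (hvu k).trans_le (le_ciSup hbdd (k + 1))
  exact ⟨⨆ k, u k,
    tendsto_nhdsWithin_iff.2 ⟨hu, Eventually.of_forall fun k ↦ (huv k).trans (hv_lt k)⟩,
    tendsto_nhdsWithin_iff.2 ⟨hv, Eventually.of_forall hv_lt⟩⟩

theorem exists_tendsto_nhdsGT_of_interlacing {α : Type*} [ConditionallyCompleteLinearOrder α]
    [TopologicalSpace α] [OrderTopology α] {u v : ℕ → α} (hvu : ∀ k, v k < u k)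
    (huv : ∀ k, u (k + 1) < v k) (hbdd : BddBelow (range u)) :
    ∃ p, Tendsto u atTop (𝓝[>] p) ∧ Tendsto v atTop (𝓝[>] p) :=
  exists_tendsto_nhdsLT_of_interlacing (α := αᵒᵈ) hvu huv hbdd

theorem IsSpiral.exists_tendsto {α : Type*} [ConditionallyCompleteLinearOrder α]
    [TopologicalSpace α] [OrderTopology α] {x : ℕ → α} (hx : IsSpiral x)
    (hbelow : BddBelow (range x)) (habove : BddAbove (range x)) : ∃ p r,
      (Tendsto (fun k ↦ x (4 * k)) atTop (𝓝[<] p) ∧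
        Tendsto (fun k ↦ x (4 * k + 1)) atTop (𝓝[<] p)) ∧
      Tendsto (fun k ↦ x (4 * k + 2)) atTop (𝓝[>] r) ∧
        Tendsto (fun k ↦ x (4 * k + 3)) atTop (𝓝[>] r) := by
  obtain ⟨p, hp⟩ := exists_tendsto_nhdsLT_of_interlacing hx.zero_lt_one hx.one_lt_four
    (habove.mono (range_comp_subset_range (fun k ↦ 4 * k) x))
  obtain ⟨r, hr⟩ := exists_tendsto_nhdsGT_of_interlacing hx.three_lt_two hx.six_lt_three
    (hbelow.mono (range_comp_subset_range (fun k ↦ 4 * k + 2) x))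
  exact ⟨p, r, hp, hr⟩

theorem map_eq_of_tendsto_of_isClosed {ι X Y : Type*} [TopologicalSpace X] [TopologicalSpace Y]
    [T2Space Y] {s : Set X} (hs : IsClosed s) {f : X → Y} (hf : ContinuousOn f s) {l : Filter ι}
    [l.NeBot] {u : ι → X} (hus : ∀ i, u i ∈ s) {z : X} {w : Y} (hu : Tendsto u l (𝓝 z))
    (hfu : Tendsto (fun i ↦ f (u i)) l (𝓝 w)) : f z = w := by
  have hz : z ∈ s := hs.mem_of_tendsto hu (Eventually.of_forall hus)
  have hu' : Tendsto u l (𝓝[s] z) := tendsto_nhdsWithin_iff.2 ⟨hu, Eventually.of_forall hus⟩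
  exact tendsto_nhds_unique ((hf z hz).tendsto.comp hu') hfu

theorem SwingsAlong.of_tendsto {ι X α : Type*} [LT α] {f : X → α} {p : α} {L : Filter X}
    {l : Filter ι} [l.NeBot] {u v : ι → X} (hu : Tendsto u l L) (hv : Tendsto v l L)
    (hpu : ∀ᶠ i in l, p < f (u i)) (hvp : ∀ᶠ i in l, f (v i) < p) : SwingsAlong f p L :=
  ⟨hu.frequently hpu.frequently, hv.frequently hvp.frequently⟩

theorem IsSpiral.exists_isSwingPoint {α : Type*} [ConditionallyCompleteLinearOrder α]
    [TopologicalSpace α] [OrderTopology α] {f : α → α} {a b q : α} (hf : ContinuousOn f (Icc a b))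
    (hmem : ∀ n, f^[n] q ∈ Icc a b) (hx : IsSpiral fun n ↦ f^[n] q) :
    ∃ p, IsSwingPoint f (Icc a b) p := by
  set x : ℕ → α := fun n ↦ f^[n] q
  have hsucc : ∀ n, f (x n) = x (n + 1) := fun n ↦ (iterate_succ_apply' f n q).symm
  have hsub : range x ⊆ Icc a b := range_subset_iff.2 hmem
  obtain ⟨p, r, ⟨hzero, hone⟩, htwo, hthree⟩ :=
    hx.exists_tendsto (bddBelow_Icc.mono hsub) (bddAbove_Icc.mono hsub)
  have hlim : ∀ {u : ℕ → ℕ} {z w : α}, Tendsto (fun k ↦ x (u k)) atTop (𝓝 z) →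
      Tendsto (fun k ↦ x (u k + 1)) atTop (𝓝 w) → f z = w := fun hz hw ↦
    map_eq_of_tendsto_of_isClosed isClosed_Icc hf (fun k ↦ hmem _) hz
      (hw.congr fun k ↦ (hsucc _).symm)
  have hfp : f p = p := hlim (hzero.mono_right inf_le_left) (hone.mono_right inf_le_left)
  obtain rfl : p = r :=
    hfp.symm.trans (hlim (hone.mono_right inf_le_left) (htwo.mono_right inf_le_left))
  have hwithin : ∀ {J : Set α} {u : ℕ → ℕ}, Tendsto (fun k ↦ x (u k)) atTop (𝓝[J] p) →
      Tendsto (fun k ↦ x (u k)) atTop (𝓝[J ∩ Icc a b] p) := fun hu ↦ by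
    rw [nhdsWithin_inter']
    exact tendsto_inf.2 ⟨hu, tendsto_principal.2 (Eventually.of_forall fun k ↦ hmem _)⟩
  have hbelow : ∀ {u : ℕ → ℕ}, Tendsto (fun k ↦ x (u k)) atTop (𝓝[<] p) →
      ∀ᶠ k in atTop, x (u k) < p := fun hu ↦ hu.eventually self_mem_nhdsWithin
  have habove : ∀ {u : ℕ → ℕ}, Tendsto (fun k ↦ x (u k)) atTop (𝓝[>] p) →
      ∀ᶠ k in atTop, p < x (u k) := fun hu ↦ hu.eventually self_mem_nhdsWithin
  have hfour : Tendsto (fun k ↦ x (4 * k + 4)) atTop (𝓝[<] p) :=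
    hzero.comp (tendsto_add_atTop_nat 1)
  refine ⟨p, isClosed_Icc.mem_of_tendsto (hzero.mono_right inf_le_left)
    (Eventually.of_forall fun k ↦ hmem _), hfp, ?_, ?_⟩
  · refine .of_tendsto (hwithin htwo) (hwithin hthree) ?_ ?_ <;> simp only [hsucc]
    exacts [habove hthree, hbelow hfour]
  · refine .of_tendsto (hwithin hone) (hwithin hzero) ?_ ?_ <;> simp only [hsucc]
    exacts [habove htwo, hbelow hone]

end Spiral

theorem IsUniversalF1.exists_isSwingPoint {a b : ℝ} {f : ℝ → ℝ} (h : IsUniversalF1 a b f)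
    (hf : ContinuousOn f (Icc a b)) (hmaps : MapsTo f (Icc a b) (Icc a b)) :
    ∃ p, IsSwingPoint f (Icc a b) p := by
  have hspiral := mapsTo_spiralMap_Icc 1
  have hno2 := (noTwoCycleOn_iff_not_exists hspiral).1 (noTwoCycleOn_spiralMap _)
  obtain ⟨q, hq, hpattern⟩ := h (-1) 1 (by norm_num) spiralMap continuous_spiralMap.continuousOn
    hspiral hno2 (-1) (left_mem_Icc.2 (by norm_num))
  have hx : IsSpiral fun n ↦ f^[n] q :=
    isSpiral_iterate_spiralMap.of_forall_lt_imp_lt fun m n ↦ (hpattern m n).1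
  exact hx.exists_isSwingPoint hf fun n ↦ hmaps.iterate n hq

theorem stmt_17_general (a b : ℝ) (f : ℝ → ℝ)
    (hf : ContinuousOn f (Set.Icc a b))
    (hmaps : Set.MapsTo f (Set.Icc a b) (Set.Icc a b)) :
    IsUniversalF1 a b f ↔
    ∃ p ∈ Set.Icc a b, f p = p ∧
      ∀ ε > (0 : ℝ),
        (∃ x₁ ∈ Set.Ioo p (p + ε) ∩ Set.Icc a b, p < f x₁) ∧
        (∃ x₂ ∈ Set.Ioo p (p + ε) ∩ Set.Icc a b, f x₂ < p) ∧
        (∃ x₃ ∈ Set.Ioo (p - ε) p ∩ Set.Icc a b, p < f x₃) ∧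
        (∃ x₄ ∈ Set.Ioo (p - ε) p ∩ Set.Icc a b, f x₄ < p) := by
  simp only [← isSwingPoint_iff]
  exact ⟨fun h ↦ h.exists_isSwingPoint hf hmaps, fun ⟨_, hp⟩ ↦ hp.isUniversalF1 hf⟩

/-- Characterization of universal maps in the first Sharkovsky class: arbitrarily
near some fixed point p, on both sides of p, the values of f swing both above and
below p. -/
theorem stmt_17 (a b : ℝ) (hab : a ≤ b) (f : ℝ → ℝ)
    (hf : ContinuousOn f (Set.Icc a b))
    (hmaps : Set.MapsTo f (Set.Icc a b) (Set.Icc a b))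
    (hno2 : ¬ ∃ x ∈ Set.Icc a b, ∃ y ∈ Set.Icc a b, x ≠ y ∧ f x = y ∧ f y = x) :
    IsUniversalF1 a b f ↔
    ∃ p ∈ Set.Icc a b, f p = p ∧
      ∀ ε > (0 : ℝ),
        (∃ x₁ ∈ Set.Ioo p (p + ε) ∩ Set.Icc a b, p < f x₁) ∧
        (∃ x₂ ∈ Set.Ioo p (p + ε) ∩ Set.Icc a b, f x₂ < p) ∧
        (∃ x₃ ∈ Set.Ioo (p - ε) p ∩ Set.Icc a b, p < f x₃) ∧
        (∃ x₄ ∈ Set.Ioo (p - ε) p ∩ Set.Icc a b, f x₄ < p) :=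
  stmt_17_general a b f hf hmaps
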